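/- With t = 2(ℓ+m), for any matrices M_1,...,M_t of block form [[a_k, b_k, 0],[0, e_k, d_k],[0, 0, a_k]] (with a_k ∈ M_ℓ(F), e_k ∈ M_m(F), b_k ∈ M_{ℓ×m}(F), d_k ∈ M_{m×ℓ}(F)), the upper-right ℓ×ℓ block of s_t(M_1,...,M_t) is zero. -/

import Mathlib

open Matrix

/-- The standard polynomial `s_d` evaluated at `x : Fin d → R`. -/
noncomputable def stdPoly {R : Type*} [Ring R] (d : ℕ) (x : Fin d → R) : R :=
  ∑ σ : Equiv.Perm (Fin d), ((Equiv.Perm.sign σ : ℤˣ) : ℤ) • (List.ofFn fun i => x (σ i)).prod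

/-- Membership in the algebra of block matrices `[[a,b,c],[0,e,d],[0,0,a]]`
(same `a` in both corner diagonal positions). -/
def memA {F : Type*} [Field F] {ℓ m : ℕ}
    (M : Matrix (Fin ℓ ⊕ (Fin m ⊕ Fin ℓ)) (Fin ℓ ⊕ (Fin m ⊕ Fin ℓ)) F) : Prop :=
  (∀ (i : Fin m) (j : Fin ℓ), M (Sum.inr (Sum.inl i)) (Sum.inl j) = 0) ∧
  (∀ (i : Fin ℓ) (j : Fin ℓ), M (Sum.inr (Sum.inr i)) (Sum.inl j) = 0) ∧
  (∀ (i : Fin ℓ) (j : Fin m), M (Sum.inr (Sum.inr i)) (Sum.inr (Sum.inl j)) = 0) ∧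
  (∀ (i j : Fin ℓ), M (Sum.inr (Sum.inr i)) (Sum.inr (Sum.inr j)) = M (Sum.inl i) (Sum.inl j))

/-
A matrix `[[a, b, c], [0, e, d], [0, 0, a]]` is read off from the matrix `[[a + εc, b], [εd, e]]`
over the dual numbers by forgetting the `ε`-parts of the right-hand blocks, and on the matrices
whose lower-left block is divisible by `ε` this forgetting is a ring homomorphism. So the algebra
of these block matrices satisfies the identities of `(ℓ + m) × (ℓ + m)` matrices over a commutative
ring, and Amitsur-Levitzki applies. The latter is proved after Rosset: `X = ∑ e_k x_k`, with `e_k`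
Grassmann generators, has anticommuting entries and `X ^ t = e_1 ⋯ e_t s_t(x)`; all powers of
`X ^ 2` have trace zero and the entries of `X ^ 2` commute, so that `X ^ (2n) = 0` when the base
ring has no torsion, and every commutative ring `R` is a quotient of the torsion-free ring
`ℤ[X_r : r ∈ R]`.
-/

section TraceNilpotent

open Polynomial

variable {R n : Type*} [CommRing R] [Fintype n] [DecidableEq n]

theorem trace_mul_adjugate (M N : Matrix n n R) :
    (N * M.adjugate).trace = ∑ i, (M.updateRow i (N i)).det := by
  refine Finset.sum_congr rfl fun i _ => ?_
  rw [← cramer_transpose_apply, cramer_eq_adjugate_mulVec, ← adjugate_transpose,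
    mulVec_transpose]
  rfl

theorem derivative_det (M : Matrix n n R[X]) :
    derivative M.det = (M.map derivative * M.adjugate).trace := by
  have det_updateRow (i : n) : (M.updateRow i ((M.map derivative) i)).det =
      ∑ σ : Equiv.Perm n, ((Equiv.Perm.sign σ : ℤ) : R[X]) *
        ((∏ j ∈ Finset.univ.erase i, M j (σ j)) * derivative (M i (σ i))) := by
    rw [← det_transpose, det_apply']
    refine Finset.sum_congr rfl fun σ _ => congrArg _ ?_
    rw [← Finset.prod_erase_mul _ _ (Finset.mem_univ i)]
    congr 1
    · refine Finset.prod_congr rfl fun j hj => ?_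
      rw [transpose_apply, updateRow_ne (Finset.ne_of_mem_erase hj)]
    · simp
  simp_rw [trace_mul_adjugate, det_updateRow]
  rw [Finset.sum_comm, ← det_transpose, det_apply', derivative_sum]
  refine Finset.sum_congr rfl fun σ _ => ?_
  rw [← Finset.mul_sum, derivative_intCast_mul, derivative_prod_finset]
  rfl

theorem derivative_charpoly (Y : Matrix n n R) :
    derivative Y.charpoly = Y.charmatrix.adjugate.trace := by
  have map_derivative_charmatrix : Y.charmatrix.map derivative = 1 := by
    ext1 i j
    by_cases h : i = j
    · subst h
      simp
    · simp [h]
  rw [charpoly, derivative_det, map_derivative_charmatrix, one_mul]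

theorem X_smul_adjugate_charmatrix (Y : Matrix n n R) :
    (X : R[X]) • Y.charmatrix.adjugate =
      Y.charpoly • (1 : Matrix n n R[X]) + C.mapMatrix Y * Y.charmatrix.adjugate := by
  rw [charpoly, ← mul_adjugate, charmatrix, sub_mul, sub_add_cancel, scalar_apply,
    ← smul_eq_diagonal_mul]

-- With `Q` the adjugate, `X • Q = χ • 1 + Y * Q` and the vanishing of the traces of powers give
-- `tr (Y ^ (k + 1) * Q) = X ^ k * tr (Y * Q)`, so `χ * tr (Y * Q) = 0` by Cayley-Hamilton.
theorem trace_mul_adjugate_charmatrix_eq_zero {Y : Matrix n n R}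
    (hY : ∀ k, (Y ^ (k + 1)).trace = 0) :
    (C.mapMatrix Y * Y.charmatrix.adjugate).trace = 0 := by
  set Q := Y.charmatrix.adjugate with hQ
  have trace_pow (k : ℕ) :
      (C.mapMatrix (Y * Y ^ k) * Q).trace = X ^ k * (C.mapMatrix Y * Q).trace := by
    induction k with
    | zero => simp
    | succ k ih =>
      have hC : (C.mapMatrix (Y * Y ^ k)).trace = 0 := by
        rw [← pow_succ', RingHom.mapMatrix_apply, ← AddMonoidHom.map_trace, hY, map_zero]
      have hX := congrArg (fun Z => (C.mapMatrix (Y * Y ^ k) * Z).trace)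
        (X_smul_adjugate_charmatrix Y)
      rw [← hQ, mul_add, trace_add, Matrix.mul_smul, Matrix.mul_smul, trace_smul, trace_smul,
        mul_one, hC, smul_zero, zero_add, ih, ← mul_assoc, ← map_mul, mul_assoc, ← pow_succ] at hX
      rw [← hX, pow_succ', mul_assoc, smul_eq_mul]
  have trace_aeval (p : R[X]) :
      (C.mapMatrix (Y * aeval Y p) * Q).trace = p * (C.mapMatrix Y * Q).trace := by
    induction p using Polynomial.induction_on' with
    | add p q hp hq => simp only [map_add, mul_add, add_mul, trace_add, hp, hq]
    | monomial k c =>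
      have : C.mapMatrix (c • (Y * Y ^ k)) = C c • C.mapMatrix (Y * Y ^ k) := by
        ext1 i j
        simp only [RingHom.mapMatrix_apply, map_apply, Matrix.smul_apply, smul_eq_mul, C_mul]
      rw [aeval_monomial, ← Algebra.smul_def, mul_smul_comm, this, Matrix.smul_mul, trace_smul,
        trace_pow, smul_eq_mul, ← mul_assoc, C_mul_X_pow_eq_monomial]
  have := trace_aeval Y.charpoly
  rw [aeval_self_charpoly, mul_zero, map_zero, zero_mul, trace_zero] at this
  exact (Y.charpoly_monic.mul_right_eq_zero_iff).1 this.symm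

theorem eq_monomial_of_X_mul_derivative_eq_nsmul [IsAddTorsionFree R] {p : R[X]} {d : ℕ}
    (hp : X * derivative p = d • p) : p = monomial d (p.coeff d) := by
  ext k
  rw [coeff_monomial]
  split_ifs with h
  · rw [h]
  · have hk : k • p.coeff k = d • p.coeff k := by
      rw [← coeff_smul d, ← hp]
      cases k <;> simp [coeff_X_mul, coeff_derivative, mul_comm]
    by_contra hne
    exact h (Nat.cast_injective (smul_left_injective ℤ hne (by simpa using hk))).symm

theorem pow_card_eq_zero_of_trace_pow_eq_zero [IsAddTorsionFree R] {Y : Matrix n n R}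
    (hY : ∀ k, (Y ^ (k + 1)).trace = 0) : Y ^ Fintype.card n = 0 := by
  nontriviality R
  have euler : X * derivative Y.charpoly = Fintype.card n • Y.charpoly := by
    have := congrArg trace (X_smul_adjugate_charmatrix Y)
    rw [trace_add, trace_mul_adjugate_charmatrix_eq_zero hY] at this
    simpa [derivative_charpoly, mul_comm] using this
  have lead : Y.charpoly.coeff (Fintype.card n) = 1 := by
    rw [← Y.charpoly_natDegree_eq_dim]
    exact Y.charpoly_monic
  have charpoly_eq := eq_monomial_of_X_mul_derivative_eq_nsmul euler
  rw [lead, monomial_one_right_eq_X_pow] at charpoly_eq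
  simpa [charpoly_eq] using aeval_self_charpoly Y

end TraceNilpotent

/-- Every entry of `X` anticommutes with every entry of `Y`, as for matrices of odd elements of a
Grassmann algebra. -/
def EntriesAnticommute {Λ p q r s : Type*} [Mul Λ] [Neg Λ] (X : Matrix p q Λ) (Y : Matrix r s Λ) :
    Prop :=
  ∀ i j k l, X i j * Y k l = -(Y k l * X i j)

namespace EntriesAnticommute

variable {Λ : Type*} [Ring Λ]

section Rectangular

variable {p q r s u v : Type*} {X : Matrix p q Λ} {Y : Matrix r s Λ}

theorem commute_mul [Fintype s] {Z : Matrix s u Λ} (hY : EntriesAnticommute X Y)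
    (hZ : EntriesAnticommute X Z) (i : p) (j : q) (k : r) (l : u) :
    Commute (X i j) ((Y * Z) k l) := by
  rw [mul_apply]
  refine Commute.sum_right _ _ _ fun a _ => ?_
  rw [commute_iff_eq, ← mul_assoc, hY, neg_mul, mul_assoc, hZ, mul_neg, neg_neg, mul_assoc]

theorem commute_mul_self [Fintype s] {X : Matrix s s Λ} (h : EntriesAnticommute X X)
    (i j k l : s) : Commute ((X * X) i j) ((X * X) k l) := by
  rw [Matrix.mul_apply (i := i)]
  exact Commute.sum_left _ _ _ fun a _ =>
    (h.commute_mul h i a k l).mul_left (h.commute_mul h a j k l)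

theorem mul_mul_right [Fintype s] [Fintype u] {Z : Matrix s u Λ} {W : Matrix u v Λ}
    (hY : EntriesAnticommute X Y) (hZ : EntriesAnticommute X Z) (hW : EntriesAnticommute X W) :
    EntriesAnticommute X (Y * Z * W) := fun i j k l => by
  rw [mul_apply, Finset.mul_sum, Finset.sum_mul, ← Finset.sum_neg_distrib]
  refine Finset.sum_congr rfl fun a _ => ?_
  rw [← mul_assoc, (hY.commute_mul hZ i j k a).eq, mul_assoc, hW, mul_neg, mul_assoc]

theorem mul_pow_two_mul_right [Fintype s] [DecidableEq s] {Z : Matrix s s Λ}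
    (hY : EntriesAnticommute X Y) (hZ : EntriesAnticommute X Z) (k : ℕ) :
    EntriesAnticommute X (Y * Z ^ (2 * k)) := by
  induction k with
  | zero => simpa using hY
  | succ k ih =>
    rw [mul_add, mul_one, pow_add, pow_two, ← Matrix.mul_assoc, ← Matrix.mul_assoc]
    exact ih.mul_mul_right hZ hZ

theorem trace_mul_eq_neg [Fintype p] [Fintype q] {Y : Matrix q p Λ}
    (h : EntriesAnticommute X Y) : (X * Y).trace = -(Y * X).trace := by
  simp only [trace, diag_apply, mul_apply, ← Finset.sum_neg_distrib]
  rw [Finset.sum_comm]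
  exact Finset.sum_congr rfl fun j _ => Finset.sum_congr rfl fun i _ => h i j j i

end Rectangular

section Square

open scoped IsMulCommutative

variable {n : Type*} [Fintype n] [DecidableEq n] [IsAddTorsionFree Λ] {X : Matrix n n Λ}

theorem trace_pow_two_mul_succ (h : EntriesAnticommute X X) (k : ℕ) :
    (X ^ (2 * (k + 1))).trace = 0 := by
  have := (h.mul_pow_two_mul_right h k).trace_mul_eq_neg
  rw [← pow_succ', ← pow_succ', ← pow_succ] at this
  exact self_eq_neg.1 this

theorem pow_two_mul_card_eq_zero (h : EntriesAnticommute X X) :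
    X ^ (2 * Fintype.card n) = 0 := by
  let entries : Set Λ := Set.range fun ij : n × n => (X * X) ij.1 ij.2
  have entries_commute : ∀ a ∈ entries, ∀ b ∈ entries, a * b = b * a := by
    rintro _ ⟨⟨i, j⟩, rfl⟩ _ ⟨⟨k, l⟩, rfl⟩
    exact h.commute_mul_self i j k l
  have := Subring.isMulCommutative_closure entries_commute
  let S := Subring.closure entries
  have : IsAddTorsionFree S := Subtype.val_injective.isAddTorsionFree S.subtype.toAddMonoidHom
  let Y : Matrix n n S := of fun i j => ⟨(X * X) i j, Subring.subset_closure ⟨(i, j), rfl⟩⟩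
  have map_Y_pow (k : ℕ) : S.subtype.mapMatrix (Y ^ k) = X ^ (2 * k) := by
    rw [map_pow, pow_mul, pow_two]
    rfl
  have trace_Y_pow (k : ℕ) : (Y ^ (k + 1)).trace = 0 := by
    apply Subtype.val_injective
    rw [← S.subtype_apply, AddMonoidHom.map_trace, ← RingHom.mapMatrix_apply, map_Y_pow,
      h.trace_pow_two_mul_succ, S.coe_zero]
  rw [← map_Y_pow, pow_card_eq_zero_of_trace_pow_eq_zero trace_Y_pow, map_zero]

end Square

end EntriesAnticommute

theorem map_stdPoly {R S : Type*} [Ring R] [Ring S] (f : R →+* S) {t : ℕ} (x : Fin t → R) :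
    f (stdPoly t x) = stdPoly t fun k => f (x k) := by
  simp only [stdPoly, map_sum, map_zsmul, map_list_prod, List.map_ofFn, Function.comp_def]

section Grassmann

open ExteriorAlgebra

variable {R n : Type*} [CommRing R] {t : ℕ}

/-- The generic element `∑ k, e_k x_k` of the family of matrices `x`, with coefficients the
generators `e_k` of the Grassmann algebra on `t` letters. -/
noncomputable def grassmannGeneric (x : Fin t → Matrix n n R) :
    Matrix n n (ExteriorAlgebra R (Fin t → R)) :=
  of fun i j => ι R fun k => x k i j

theorem grassmannGeneric_entriesAnticommute (x : Fin t → Matrix n n R) :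
    EntriesAnticommute (grassmannGeneric x) (grassmannGeneric x) := fun _ _ _ _ =>
  eq_neg_of_add_eq_zero_left (ι_add_mul_swap _ _)

theorem grassmannGeneric_eq_sum (x : Fin t → Matrix n n R) :
    grassmannGeneric x = ∑ k, (x k).map (· • ι R (Pi.single k 1)) := by
  ext1 i j
  simp only [grassmannGeneric, of_apply, Matrix.sum_apply, map_apply, ← map_smul, ← map_sum]
  congr 1
  ext k
  simp [Pi.single_apply]

theorem isAddTorsionFree_exteriorAlgebra [IsAddTorsionFree R] {I V : Type*} [LinearOrder I]
    [AddCommGroup V] [Module R V] (b : Module.Basis I R V) :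
    IsAddTorsionFree (ExteriorAlgebra R V) :=
  b.ExteriorAlgebra.repr.injective.isAddTorsionFree b.ExteriorAlgebra.repr.toAddMonoidHom

variable [Fintype n] [DecidableEq n]

theorem prod_ofFn_map_smul {Λ : Type*} [Ring Λ] [Algebra R Λ] (M : Fin t → Matrix n n R)
    (e : Fin t → Λ) :
    (List.ofFn fun i => (M i).map (· • e i)).prod =
      (List.ofFn M).prod.map (· • (List.ofFn e).prod) := by
  induction t with
  | zero =>
    ext1 i j
    simp [one_apply, ite_smul]
  | succ t ih =>
    simp only [List.ofFn_succ, List.prod_cons, ih]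
    ext1 i j
    simp only [mul_apply, map_apply, smul_mul_smul_comm, Finset.sum_smul]

theorem grassmannGeneric_pow (x : Fin t → Matrix n n R) :
    grassmannGeneric x ^ t =
      (stdPoly t x).map (· • ιMulti R t fun i => (Pi.single i 1 : Fin t → R)) := by
  have expand : grassmannGeneric x ^ t = ∑ r : Fin t → Fin t,
      (List.ofFn fun i => x (r i)).prod.map
        (· • ιMulti R t fun i => (Pi.single (r i) 1 : Fin t → R)) := by
    rw [← MultilinearMap.mkPiAlgebraFin_apply_const (R := R), grassmannGeneric_eq_sum,
      MultilinearMap.map_sum]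
    simp only [MultilinearMap.mkPiAlgebraFin_apply, prod_ofFn_map_smul, ιMulti_apply]
  have of_perm (σ : Equiv.Perm (Fin t)) :
      ιMulti R t (fun i => (Pi.single (σ i) 1 : Fin t → R)) =
        Equiv.Perm.sign σ • ιMulti R t fun i => (Pi.single i 1 : Fin t → R) :=
    (ιMulti R t).map_perm (fun i => Pi.single i 1) σ
  have of_not_perm (r : Fin t → Fin t)
      (hr : r ∉ Set.range fun σ : Equiv.Perm (Fin t) => (σ : Fin t → Fin t)) :
      ιMulti R t (fun i => (Pi.single (r i) 1 : Fin t → R)) = 0 := by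
    refine ιMulti_eq_zero_of_not_inj fun h => hr ?_
    have : r.Injective := fun i j hij => h (by simp only [hij])
    exact ⟨Equiv.ofBijective r (Finite.injective_iff_bijective.1 this), rfl⟩
  rw [expand]
  ext1 i j
  simp only [stdPoly, Matrix.sum_apply, map_apply, Finset.sum_smul]
  symm
  refine Fintype.sum_of_injective (fun σ : Equiv.Perm (Fin t) => (σ : Fin t → Fin t))
    DFunLike.coe_injective _ _ (fun r hr => ?_) fun σ => ?_
  · rw [of_not_perm r hr, smul_zero]
  · rw [of_perm, Matrix.smul_apply, Units.smul_def, smul_comm, smul_assoc]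

theorem ιMulti_single_smul_eq_zero {c : R}
    (h : c • ιMulti R t (fun i => (Pi.single i 1 : Fin t → R)) = 0) : c = 0 := by
  let det := liftAlternating (R := R) (M := Fin t → R) (N := R)
    (Function.update 0 t Matrix.detRowAlternating)
  have det_single : det (ιMulti R t fun i => Pi.single i 1) = 1 := by
    rw [liftAlternating_apply_ιMulti, Function.update_self, ← Matrix.det_one (n := Fin t)]
    refine congrArg Matrix.det ?_
    ext i j
    simp [one_apply, Pi.single_apply, eq_comm]
  simpa [det_single] using congrArg det h

end Grassmann

section AmitsurLevitzki

variable {R n : Type*} [CommRing R] [Fintype n] [DecidableEq n] {t : ℕ}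

theorem stdPoly_eq_zero_of_isAddTorsionFree [IsAddTorsionFree R] (ht : 2 * Fintype.card n ≤ t)
    (x : Fin t → Matrix n n R) : stdPoly t x = 0 := by
  have : IsAddTorsionFree (ExteriorAlgebra R (Fin t → R)) :=
    isAddTorsionFree_exteriorAlgebra (Pi.basisFun R (Fin t))
  have pow_eq_zero : grassmannGeneric x ^ t = 0 := pow_eq_zero_of_le ht
    (grassmannGeneric_entriesAnticommute x).pow_two_mul_card_eq_zero
  rw [grassmannGeneric_pow] at pow_eq_zero
  ext i j
  exact ιMulti_single_smul_eq_zero (congrFun₂ pow_eq_zero i j)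

theorem amitsur_levitzki (ht : 2 * Fintype.card n ≤ t) (x : Fin t → Matrix n n R) :
    stdPoly t x = 0 := by
  let generic (k : Fin t) : Matrix n n (MvPolynomial R ℤ) := (x k).map MvPolynomial.X
  have map_generic (k : Fin t) : (MvPolynomial.counit R).mapMatrix (generic k) = x k := by
    ext i j
    simp [generic]
  have := congrArg (MvPolynomial.counit R).mapMatrix
    (stdPoly_eq_zero_of_isAddTorsionFree ht generic)
  simpa only [map_stdPoly, map_generic, map_zero] using this

end AmitsurLevitzki

section CornerBlocks

variable {R p q : Type*}

/-- The block matrix `[[a, b, c], [0, e, d], [0, 0, a]]`. -/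
def cornerBlocks [Zero R] (a c : Matrix p p R) (b : Matrix p q R) (d : Matrix q p R)
    (e : Matrix q q R) : Matrix (p ⊕ (q ⊕ p)) (p ⊕ (q ⊕ p)) R :=
  fromBlocks a (fromCols b c) 0 (fromBlocks e d 0 a)

theorem cornerBlocks_one [Zero R] [One R] [DecidableEq p] [DecidableEq q] :
    cornerBlocks 1 0 0 0 1 = (1 : Matrix (p ⊕ (q ⊕ p)) (p ⊕ (q ⊕ p)) R) := by
  ext (i | i | i) (j | j | j) <;> simp [cornerBlocks, one_apply]

theorem cornerBlocks_add [AddZeroClass R] (a c a' c' : Matrix p p R) (b b' : Matrix p q R)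
    (d d' : Matrix q p R) (e e' : Matrix q q R) :
    cornerBlocks a c b d e + cornerBlocks a' c' b' d' e' =
      cornerBlocks (a + a') (c + c') (b + b') (d + d') (e + e') := by
  simp only [cornerBlocks, fromBlocks_add, add_zero]
  congr 1
  ext i (j | j) <;> rfl

theorem cornerBlocks_mul [Semiring R] [Fintype p] [Fintype q] (a c a' c' : Matrix p p R)
    (b b' : Matrix p q R) (d d' : Matrix q p R) (e e' : Matrix q q R) :
    cornerBlocks a c b d e * cornerBlocks a' c' b' d' e' =
      cornerBlocks (a * a') (a * c' + b * d' + c * a') (a * b' + b * e') (d * a' + e * d')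
        (e * e') := by
  simp only [cornerBlocks, fromBlocks_multiply]
  congr 1
  · simp
  · rw [mul_fromCols, fromCols_mul_fromBlocks]
    ext i (j | j) <;> simp [add_assoc]
  · simp
  · simp [add_comm]

theorem memA.eq_cornerBlocks {F : Type*} [Field F] {ℓ m : ℕ}
    {M : Matrix (Fin ℓ ⊕ (Fin m ⊕ Fin ℓ)) (Fin ℓ ⊕ (Fin m ⊕ Fin ℓ)) F} (hM : memA M) :
    M = cornerBlocks M.toBlocks₁₁ M.toBlocks₁₂.toCols₂ M.toBlocks₁₂.toCols₁
      M.toBlocks₂₂.toBlocks₁₂ M.toBlocks₂₂.toBlocks₁₁ := by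
  obtain ⟨h₁, h₂, h₃, h₄⟩ := hM
  ext (i | i | i) (j | j | j)
  all_goals first | rfl | simp [cornerBlocks, toBlocks₁₁, *]

end CornerBlocks

section DualNumber

open DualNumber TrivSqZeroExt

section Rectangular

variable {R l m n : Type*} [Semiring R] [Fintype m]

theorem map_fst_mul (Z : Matrix l m R[ε]) (W : Matrix m n R[ε]) :
    (Z * W).map fst = Z.map fst * W.map fst := by
  ext i j
  simp [mul_apply, fst_sum]

theorem map_snd_mul (Z : Matrix l m R[ε]) (W : Matrix m n R[ε]) :
    (Z * W).map snd = Z.map fst * W.map snd + Z.map snd * W.map fst := by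
  ext i j
  simp [mul_apply, snd_sum, Finset.sum_add_distrib]

end Rectangular

/-- The ring of block matrices over the dual numbers whose lower-left block vanishes modulo `ε`. -/
def lowerLeftInfinitesimal (R p q : Type*) [Ring R] [Fintype p] [Fintype q] [DecidableEq p]
    [DecidableEq q] : Subring (Matrix (p ⊕ q) (p ⊕ q) R[ε]) where
  carrier := {Z | ∀ i j, (Z (Sum.inr i) (Sum.inl j)).fst = 0}
  zero_mem' _ _ := rfl
  one_mem' _ _ := by simp
  add_mem' hZ hW i j := by simp [hZ i j, hW i j]
  neg_mem' hZ i j := by simp [hZ i j]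
  mul_mem' hZ hW i j := by simp [mul_apply, fst_sum, hZ i, hW _ j]

section Ring

variable {R p q : Type*} [Ring R] [Fintype p] [Fintype q] [DecidableEq p] [DecidableEq q]

theorem toBlocks₂₁_map_fst (Z : lowerLeftInfinitesimal R p q) :
    Z.1.toBlocks₂₁.map fst = 0 := by
  ext i j
  exact Z.2 i j

/-- The ring homomorphism `[[a + εc, b + εu], [εd, e + εv]] ↦ [[a, b, c], [0, e, d], [0, 0, a]]`
forgetting the infinitesimal parts `u` and `v`. -/
def cornerBlocksOfDual :
    lowerLeftInfinitesimal R p q →+* Matrix (p ⊕ (q ⊕ p)) (p ⊕ (q ⊕ p)) R where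
  toFun Z := cornerBlocks (Z.1.toBlocks₁₁.map fst) (Z.1.toBlocks₁₁.map snd)
    (Z.1.toBlocks₁₂.map fst) (Z.1.toBlocks₂₁.map snd) (Z.1.toBlocks₂₂.map fst)
  map_zero' := by
    ext (i | i | i) (j | j | j) <;> rfl
  map_one' := by
    rw [← cornerBlocks_one, OneMemClass.coe_one, ← fromBlocks_one]
    simp only [toBlocks_fromBlocks₁₁, toBlocks_fromBlocks₁₂, toBlocks_fromBlocks₂₁,
      toBlocks_fromBlocks₂₂]
    congr 1 <;> ext i j <;> by_cases h : i = j <;> simp [h, one_apply]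
  map_add' Z W := by
    rw [cornerBlocks_add]
    rfl
  map_mul' Z W := by
    rw [cornerBlocks_mul, MulMemClass.coe_mul, ← fromBlocks_toBlocks Z.1,
      ← fromBlocks_toBlocks W.1, fromBlocks_multiply]
    simp only [toBlocks_fromBlocks₁₁, toBlocks_fromBlocks₁₂, toBlocks_fromBlocks₂₁,
      toBlocks_fromBlocks₂₂, Matrix.map_add _ fst_add, Matrix.map_add _ snd_add, map_fst_mul,
      map_snd_mul, toBlocks₂₁_map_fst, Matrix.mul_zero, Matrix.zero_mul, add_zero, zero_add]
    congr 1
    abel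

theorem exists_cornerBlocksOfDual_eq (a c : Matrix p p R) (b : Matrix p q R) (d : Matrix q p R)
    (e : Matrix q q R) :
    ∃ Z : lowerLeftInfinitesimal R p q, cornerBlocksOfDual Z = cornerBlocks a c b d e := by
  refine ⟨⟨fromBlocks (a.map inl + c.map inr) (b.map inl) (d.map inr) (e.map inl),
    fun _ _ => rfl⟩, ?_⟩
  ext (i | i | i) (j | j | j) <;> simp [cornerBlocksOfDual, cornerBlocks]

end Ring

end DualNumber

theorem ur_std_zero_general {R p q : Type*} [CommRing R] [Fintype p] [Fintype q] [DecidableEq p]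
    [DecidableEq q] {t : ℕ} (ht : 2 * (Fintype.card p + Fintype.card q) ≤ t)
    (a c : Fin t → Matrix p p R) (b : Fin t → Matrix p q R) (d : Fin t → Matrix q p R)
    (e : Fin t → Matrix q q R) :
    stdPoly t (fun k => cornerBlocks (a k) (c k) (b k) (d k) (e k)) = 0 := by
  choose Z hZ using fun k => exists_cornerBlocksOfDual_eq (a k) (c k) (b k) (d k) (e k)
  have stdPoly_Z : stdPoly t Z = 0 := by
    apply Subtype.val_injective
    rw [← Subring.subtype_apply, map_stdPoly]
    exact amitsur_levitzki (by rwa [Fintype.card_sum]) _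
  simp only [← hZ]
  rw [← map_stdPoly, stdPoly_Z, map_zero]

/-- For matrices of block form `[[a_k,b_k,0],[0,e_k,d_k],[0,0,a_k]]`, the upper-right
`ℓ×ℓ` block of `s_{2(ℓ+m)}(M₁,…,M_t)` vanishes. -/
theorem ur_std_zero (F : Type*) [Field F] (ℓ m : ℕ) (hℓ : 0 < ℓ) (hm : 0 < m)
    (x : Fin (2 * (ℓ + m)) →
      Matrix (Fin ℓ ⊕ (Fin m ⊕ Fin ℓ)) (Fin ℓ ⊕ (Fin m ⊕ Fin ℓ)) F)
    (hx : ∀ k, memA (x k))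
    (hur : ∀ k (i j : Fin ℓ), x k (Sum.inl i) (Sum.inr (Sum.inr j)) = 0) :
    ∀ i j : Fin ℓ,
      stdPoly (2 * (ℓ + m)) x (Sum.inl i) (Sum.inr (Sum.inr j)) = 0 := by
  intro i j
  rw [funext fun k => (hx k).eq_cornerBlocks, ur_std_zero_general (by simp)]
  rfl
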